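/- Let Ξ be a measurable space, P̂ a probability measure on Ξ, 𝒫 a nonempty set of probability measures on Ξ, X a nonempty set, and f : X × Ξ → ℝ such that for every x ∈ X the function f(x,·) is integrable with respect to P̂ and with respect to every Q ∈ 𝒫. Assume there is C ≥ 0 with |∫ f(x,·) dP̂| ≤ C for all x ∈ X and |∫ f(x,·) dQ| ≤ C for all x ∈ X and Q ∈ 𝒫. For θ ∈ [0,1] let 𝒫'_θ := {(1−θ)·P̂ + θ·Q : Q ∈ 𝒫} and v(θ) := inf_{x∈X} sup_{P∈𝒫'_θ} ∫ f(x,·) dP. Then for all θ₁, θ₂ ∈ [0,1], |v(θ₁) − v(θ₂)| ≤ 2C·|θ₁ − θ₂|. -/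

import Mathlib

open MeasureTheory

/-- The mixture `(1-θ)·P + θ·Q` of two measures. -/
noncomputable def mix {Ξ : Type*} [MeasurableSpace Ξ] (θ : ℝ) (P Q : Measure Ξ) : Measure Ξ :=
  ENNReal.ofReal (1 - θ) • P + ENNReal.ofReal θ • Q

/-!
Along the segment from `P` to `Q` the expectation of a fixed cost is affine in `θ`, with slope
`∫ g ∂Q - ∫ g ∂P`. If these slopes are bounded by `K`, uniformly in the decision and in `Q`, then
all the functions of `θ` entering the min-max are `K`-Lipschitz on `[0, 1]`, and pointwise suprema
and infima preserve this. Costs bounded by `C` in expectation have slopes bounded by `2 * C`.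
-/

section ConditionallyComplete

variable {α ι : Type*} [ConditionallyCompleteLinearOrder α] [AddCommGroup α]
  [IsOrderedAddMonoid α] [Nonempty ι] {g h : ι → α} {K : α}

lemma abs_ciSup_sub_ciSup_le (hg : BddAbove (Set.range g)) (hh : BddAbove (Set.range h))
    (hgh : ∀ i, |g i - h i| ≤ K) : |(⨆ i, g i) - ⨆ i, h i| ≤ K := by
  rw [abs_sub_le_iff, sub_le_iff_le_add', sub_le_iff_le_add']
  constructor
  · exact ciSup_le fun i ↦ (sub_le_iff_le_add'.1 (abs_sub_le_iff.1 (hgh i)).1).trans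
      (by gcongr; exact le_ciSup hh i)
  · exact ciSup_le fun i ↦ (sub_le_iff_le_add'.1 (abs_sub_le_iff.1 (hgh i)).2).trans
      (by gcongr; exact le_ciSup hg i)

lemma abs_ciInf_sub_ciInf_le (hg : BddBelow (Set.range g)) (hh : BddBelow (Set.range h))
    (hgh : ∀ i, |g i - h i| ≤ K) : |(⨅ i, g i) - ⨅ i, h i| ≤ K := by
  rw [abs_sub_le_iff, sub_le_comm, sub_le_comm (b := ⨅ i, g i)]
  constructor
  · exact le_ciInf fun i ↦ (sub_le_sub_right (ciInf_le hg i) K).trans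
      (sub_le_comm.1 (abs_sub_le_iff.1 (hgh i)).1)
  · exact le_ciInf fun i ↦ (sub_le_sub_right (ciInf_le hh i) K).trans
      (sub_le_comm.1 (abs_sub_le_iff.1 (hgh i)).2)

end ConditionallyComplete

section Mixture

variable {Ξ E : Type*} [MeasurableSpace Ξ] [NormedAddCommGroup E] [NormedSpace ℝ E]
  {P Q : Measure Ξ} {g : Ξ → E} {θ θ₁ θ₂ : ℝ}

lemma mix_zero (P Q : Measure Ξ) : mix 0 P Q = P := by
  simp [mix]

lemma integral_mix (hθ : θ ∈ Set.Icc (0 : ℝ) 1) (hP : Integrable g P) (hQ : Integrable g Q) :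
    ∫ ξ, g ξ ∂(mix θ P Q) = AffineMap.lineMap (∫ ξ, g ξ ∂P) (∫ ξ, g ξ ∂Q) θ := by
  rw [mix, integral_add_measure (hP.smul_measure ENNReal.ofReal_ne_top)
      (hQ.smul_measure ENNReal.ofReal_ne_top), integral_smul_measure, integral_smul_measure,
    ENNReal.toReal_ofReal (sub_nonneg.2 hθ.2), ENNReal.toReal_ofReal hθ.1,
    AffineMap.lineMap_apply_module]

lemma dist_integral_mix_integral_mix (hθ₁ : θ₁ ∈ Set.Icc (0 : ℝ) 1)
    (hθ₂ : θ₂ ∈ Set.Icc (0 : ℝ) 1) (hP : Integrable g P) (hQ : Integrable g Q) :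
    dist (∫ ξ, g ξ ∂(mix θ₁ P Q)) (∫ ξ, g ξ ∂(mix θ₂ P Q)) =
      dist θ₁ θ₂ * dist (∫ ξ, g ξ ∂P) (∫ ξ, g ξ ∂Q) := by
  rw [integral_mix hθ₁ hP hQ, integral_mix hθ₂ hP hQ, dist_lineMap_lineMap]

lemma abs_integral_mix_sub_integral_mix_le {g : Ξ → ℝ} {K : ℝ}
    (hθ₁ : θ₁ ∈ Set.Icc (0 : ℝ) 1) (hθ₂ : θ₂ ∈ Set.Icc (0 : ℝ) 1) (hP : Integrable g P)
    (hQ : Integrable g Q) (hK : |∫ ξ, g ξ ∂Q - ∫ ξ, g ξ ∂P| ≤ K) :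
    |∫ ξ, g ξ ∂(mix θ₁ P Q) - ∫ ξ, g ξ ∂(mix θ₂ P Q)| ≤ K * |θ₁ - θ₂| := by
  rw [← Real.dist_eq, dist_integral_mix_integral_mix hθ₁ hθ₂ hP hQ, dist_comm (∫ ξ, g ξ ∂P),
    Real.dist_eq, Real.dist_eq, mul_comm]
  gcongr

end Mixture

section WorstCase

variable {Ξ : Type*} [MeasurableSpace Ξ]

/-- The worst-case expectation of the cost `g` over the mixtures `(1-θ)·P + θ·Q`, `Q ∈ 𝒜`, of the
reference measure `P`. It is a supremum in `ℝ`, hence `0` when `𝒜` is empty or these expectations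
are not bounded above. -/
noncomputable def worstCaseExpectation (P : Measure Ξ) (𝒜 : Set (Measure Ξ)) (g : Ξ → ℝ)
    (θ : ℝ) : ℝ :=
  ⨆ Q : 𝒜, ∫ ξ, g ξ ∂(mix θ P (Q : Measure Ξ))

variable {P : Measure Ξ} {𝒜 : Set (Measure Ξ)} {g : Ξ → ℝ} {K θ θ₁ θ₂ : ℝ}

lemma worstCaseExpectation_zero (h𝒜 : 𝒜.Nonempty) :
    worstCaseExpectation P 𝒜 g 0 = ∫ ξ, g ξ ∂P := by
  have : Nonempty 𝒜 := h𝒜.to_subtype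
  simp only [worstCaseExpectation, mix_zero, ciSup_const]

lemma bddAbove_range_integral_mix (hθ : θ ∈ Set.Icc (0 : ℝ) 1) (hP : Integrable g P)
    (hint : ∀ Q ∈ 𝒜, Integrable g Q) (hK : ∀ Q ∈ 𝒜, |∫ ξ, g ξ ∂Q - ∫ ξ, g ξ ∂P| ≤ K) :
    BddAbove (Set.range fun Q : 𝒜 ↦ ∫ ξ, g ξ ∂(mix θ P (Q : Measure Ξ))) := by
  refine ⟨∫ ξ, g ξ ∂P + K * |θ - 0|, Set.forall_mem_range.2 fun Q ↦ ?_⟩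
  have hQ := abs_integral_mix_sub_integral_mix_le hθ unitInterval.zero_mem hP (hint Q Q.2)
    (hK Q Q.2)
  rw [mix_zero] at hQ
  exact sub_le_iff_le_add'.1 (abs_le.1 hQ).2

lemma abs_worstCaseExpectation_sub_le (h𝒜 : 𝒜.Nonempty) (hθ₁ : θ₁ ∈ Set.Icc (0 : ℝ) 1)
    (hθ₂ : θ₂ ∈ Set.Icc (0 : ℝ) 1) (hP : Integrable g P) (hint : ∀ Q ∈ 𝒜, Integrable g Q)
    (hK : ∀ Q ∈ 𝒜, |∫ ξ, g ξ ∂Q - ∫ ξ, g ξ ∂P| ≤ K) :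
    |worstCaseExpectation P 𝒜 g θ₁ - worstCaseExpectation P 𝒜 g θ₂| ≤ K * |θ₁ - θ₂| := by
  have : Nonempty 𝒜 := h𝒜.to_subtype
  exact abs_ciSup_sub_ciSup_le (bddAbove_range_integral_mix hθ₁ hP hint hK)
    (bddAbove_range_integral_mix hθ₂ hP hint hK) fun Q ↦
      abs_integral_mix_sub_integral_mix_le hθ₁ hθ₂ hP (hint Q Q.2) (hK Q Q.2)

end WorstCase

section OptimalValue

variable {Ξ X : Type*} [MeasurableSpace Ξ]

/-- The optimal value `v(θ)` of the trade-off model: the infimum over decisions `x` of the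
worst-case expectation of `f x`. It is an infimum in `ℝ`, hence `0` when `X` is empty or these
expectations are not bounded below. -/
noncomputable def troValue (P : Measure Ξ) (𝒜 : Set (Measure Ξ)) (f : X → Ξ → ℝ) (θ : ℝ) : ℝ :=
  ⨅ x, worstCaseExpectation P 𝒜 (f x) θ

variable {P : Measure Ξ} {𝒜 : Set (Measure Ξ)} {f : X → Ξ → ℝ} {K θ θ₁ θ₂ : ℝ}

lemma bddBelow_range_worstCaseExpectation (h𝒜 : 𝒜.Nonempty) (hθ : θ ∈ Set.Icc (0 : ℝ) 1)
    (hP : ∀ x, Integrable (f x) P) (hint : ∀ x, ∀ Q ∈ 𝒜, Integrable (f x) Q)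
    (hbdd : BddBelow (Set.range fun x ↦ ∫ ξ, f x ξ ∂P))
    (hK : ∀ x, ∀ Q ∈ 𝒜, |∫ ξ, f x ξ ∂Q - ∫ ξ, f x ξ ∂P| ≤ K) :
    BddBelow (Set.range fun x ↦ worstCaseExpectation P 𝒜 (f x) θ) := by
  obtain ⟨b, hb⟩ := hbdd
  refine ⟨b - K * |0 - θ|, Set.forall_mem_range.2 fun x ↦ ?_⟩
  have hx := abs_worstCaseExpectation_sub_le h𝒜 unitInterval.zero_mem hθ (hP x) (hint x) (hK x)
  rw [worstCaseExpectation_zero h𝒜] at hx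
  calc b - K * |0 - θ| ≤ ∫ ξ, f x ξ ∂P - K * |0 - θ| :=
        sub_le_sub_right (hb (Set.mem_range_self x)) _
    _ ≤ worstCaseExpectation P 𝒜 (f x) θ := sub_le_comm.1 (abs_le.1 hx).2

theorem tro_optimal_value_lipschitz_general [Nonempty X] (h𝒜 : 𝒜.Nonempty)
    (hP : ∀ x, Integrable (f x) P) (hint : ∀ x, ∀ Q ∈ 𝒜, Integrable (f x) Q)
    (hbdd : BddBelow (Set.range fun x ↦ ∫ ξ, f x ξ ∂P))
    (hK : ∀ x, ∀ Q ∈ 𝒜, |∫ ξ, f x ξ ∂Q - ∫ ξ, f x ξ ∂P| ≤ K)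
    (hθ₁ : θ₁ ∈ Set.Icc (0 : ℝ) 1) (hθ₂ : θ₂ ∈ Set.Icc (0 : ℝ) 1) :
    |troValue P 𝒜 f θ₁ - troValue P 𝒜 f θ₂| ≤ K * |θ₁ - θ₂| :=
  abs_ciInf_sub_ciInf_le (bddBelow_range_worstCaseExpectation h𝒜 hθ₁ hP hint hbdd hK)
    (bddBelow_range_worstCaseExpectation h𝒜 hθ₂ hP hint hbdd hK) fun x ↦
      abs_worstCaseExpectation_sub_le h𝒜 hθ₁ hθ₂ (hP x) (hint x) (hK x)

end OptimalValue

/-- Lipschitz continuity of the TRO optimal value `v(θ)` in the size parameter `θ`: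
`|v(θ₁) − v(θ₂)| ≤ 2C|θ₁ − θ₂|`. -/
theorem tro_optimal_value_lipschitz
    {Ξ X : Type*} [MeasurableSpace Ξ] [Nonempty X]
    (Phat : Measure Ξ) [IsProbabilityMeasure Phat]
    (𝒜 : Set (Measure Ξ)) (h𝒜ne : 𝒜.Nonempty)
    (h𝒜prob : ∀ Q ∈ 𝒜, IsProbabilityMeasure Q)
    (f : X → Ξ → ℝ)
    (hint0 : ∀ x, Integrable (f x) Phat)
    (hint : ∀ x, ∀ Q ∈ 𝒜, Integrable (f x) Q)
    (C : ℝ) (hC : 0 ≤ C)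
    (hb0 : ∀ x, |∫ ξ, f x ξ ∂Phat| ≤ C)
    (hb : ∀ x, ∀ Q ∈ 𝒜, |∫ ξ, f x ξ ∂Q| ≤ C)
    (v : ℝ → ℝ)
    (hv : ∀ θ, v θ = ⨅ x : X, ⨆ Q : 𝒜, ∫ ξ, f x ξ ∂(mix θ Phat (Q : Measure Ξ))) :
    ∀ θ₁ ∈ Set.Icc (0:ℝ) 1, ∀ θ₂ ∈ Set.Icc (0:ℝ) 1,
      |v θ₁ - v θ₂| ≤ 2 * C * |θ₁ - θ₂| := by
  intro θ₁ hθ₁ θ₂ hθ₂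
  obtain rfl : v = troValue Phat 𝒜 f := funext hv
  have hbdd : BddBelow (Set.range fun x ↦ ∫ ξ, f x ξ ∂Phat) :=
    ⟨-C, Set.forall_mem_range.2 fun x ↦ (abs_le.1 (hb0 x)).1⟩
  have hslope : ∀ x, ∀ Q ∈ 𝒜, |∫ ξ, f x ξ ∂Q - ∫ ξ, f x ξ ∂Phat| ≤ 2 * C := fun x Q hQ ↦
    (abs_sub _ _).trans (by linarith [hb0 x, hb x Q hQ])
  exact tro_optimal_value_lipschitz_general h𝒜ne hint0 hint hbdd hslope hθ₁ hθ₂
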